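/- arXiv:1602.07080 — 4 statements merged into one kernel-verified Lean document; each statement's English description precedes it below -/
import Mathlib

section
/- Let E : ℝ^N × ℝ^P → ℝ be such that ∇ₓE is continuously differentiable near (x₀, θ₀), ∇ₓE(x₀, θ₀) = 0, and H_E(x₀, θ₀) is invertible, so that a continuously differentiable local solution map x*(θ) with x*(θ₀) = x₀ and ∇ₓE(x*(θ), θ) = 0 exists. Let L : ℝ^N × ℝ^P → ℝ be continuously differentiable. Then the reduced objective θ ↦ L(x*(θ), θ) is differentiable at θ₀ and its derivative equals −(∂L/∂x)(x₀, θ₀) · (H_E(x₀, θ₀))⁻¹ · (∂²E/∂θ∂x)(x₀, θ₀) + (∂L/∂θ)(x₀, θ₀). -/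
open Filter Topology

/-!
Both `F = G` and `F = L` are differentiated along the graph `θ ↦ (x*(θ), θ)`, which gives
`∂ₓF ∘ Dx* + ∂_θF`. As `G` is constant along the graph, `H ∘ Dx* + ∂_θG = 0`; solving for `Dx*`
and substituting into the derivative of `L` yields the formula.
-/

section

variable {𝕜 X T Y Z : Type*} [NontriviallyNormedField 𝕜]
  [NormedAddCommGroup X] [NormedSpace 𝕜 X] [NormedAddCommGroup T] [NormedSpace 𝕜 T]
  [NormedAddCommGroup Y] [NormedSpace 𝕜 Y] [NormedAddCommGroup Z] [NormedSpace 𝕜 Z]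

theorem fderiv_eq_coprod_partial_fderiv {F : X × T → Y} {x : X} {t : T}
    (hF : DifferentiableAt 𝕜 F (x, t)) :
    fderiv 𝕜 F (x, t) =
      (fderiv 𝕜 (fun x' => F (x', t)) x).coprod (fderiv 𝕜 (fun t' => F (x, t')) t) := by
  have hfst : HasFDerivAt (fun x' => F (x', t)) (fderiv 𝕜 F (x, t) ∘L .inl 𝕜 X T) x :=
    hF.hasFDerivAt.comp x (hasFDerivAt_prodMk_left x t)
  have hsnd : HasFDerivAt (fun t' => F (x, t')) (fderiv 𝕜 F (x, t) ∘L .inr 𝕜 X T) t :=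
    hF.hasFDerivAt.comp t (hasFDerivAt_prodMk_right x t)
  rw [hfst.fderiv, hsnd.fderiv, ContinuousLinearMap.coprod_comp_inl_inr]

theorem hasFDerivAt_comp_graph {F : X × T → Y} {u : T → X} {u' : T →L[𝕜] X} {t : T}
    (hF : DifferentiableAt 𝕜 F (u t, t)) (hu : HasFDerivAt u u' t) :
    HasFDerivAt (fun s => F (u s, s))
      (fderiv 𝕜 (fun x => F (x, t)) (u t) ∘L u' + fderiv 𝕜 (fun s => F (u t, s)) t) t := by
  have hcomp : HasFDerivAt (fun s => F (u s, s))
      (fderiv 𝕜 F (u t, t) ∘L u'.prod (.id 𝕜 T)) t :=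
    hF.hasFDerivAt.comp (f := fun s => (u s, s)) t (hu.prodMk (hasFDerivAt_id t))
  exact hcomp.congr_fderiv (by rw [fderiv_eq_coprod_partial_fderiv hF]; rfl)

theorem fderiv_eq_neg_symm_comp_of_eventually_eq_const {G : X × T → Y} {u : T → X} {t : T} {c : Y}
    (hG : DifferentiableAt 𝕜 G (u t, t)) (hu : DifferentiableAt 𝕜 u t)
    (H : X ≃L[𝕜] Y) (hH : (H : X →L[𝕜] Y) = fderiv 𝕜 (fun x => G (x, t)) (u t))
    (hconst : ∀ᶠ s in 𝓝 t, G (u s, s) = c) :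
    fderiv 𝕜 u t = -((H.symm : Y →L[𝕜] X) ∘L fderiv 𝕜 (fun s => G (u t, s)) t) := by
  have hzero : HasFDerivAt (fun s => G (u s, s)) (0 : T →L[𝕜] Y) t :=
    (hasFDerivAt_const c t).congr_of_eventuallyEq hconst
  have hlinear : (H : X →L[𝕜] Y) ∘L fderiv 𝕜 u t + fderiv 𝕜 (fun s => G (u t, s)) t = 0 := by
    rw [hH]
    exact (hasFDerivAt_comp_graph hG hu.hasFDerivAt).unique hzero
  rw [eq_neg_of_add_eq_zero_right hlinear]
  ext v
  simp

theorem stmt_1_general {G : X × T → Y} {L : X × T → Z} {xs : T → X} {θ₀ : T} {c : Y}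
    (hG : DifferentiableAt 𝕜 G (xs θ₀, θ₀)) (hL : DifferentiableAt 𝕜 L (xs θ₀, θ₀))
    (hxs : DifferentiableAt 𝕜 xs θ₀)
    (H : X ≃L[𝕜] Y) (hH : (H : X →L[𝕜] Y) = fderiv 𝕜 (fun x => G (x, θ₀)) (xs θ₀))
    (hsol : ∀ᶠ θ in 𝓝 θ₀, G (xs θ, θ) = c) :
    HasFDerivAt (fun θ => L (xs θ, θ))
      (-(fderiv 𝕜 (fun x => L (x, θ₀)) (xs θ₀) ∘L
          ((H.symm : Y →L[𝕜] X) ∘L fderiv 𝕜 (fun t => G (xs θ₀, t)) θ₀))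
        + fderiv 𝕜 (fun t => L (xs θ₀, t)) θ₀) θ₀ := by
  rw [← ContinuousLinearMap.comp_neg,
    ← fderiv_eq_neg_symm_comp_of_eventually_eq_const hG hxs H hH hsol]
  exact hasFDerivAt_comp_graph hL hxs.hasFDerivAt

end

/-- Total derivative of the reduced upper level objective `θ ↦ L(x*(θ), θ)` via the
implicit function theorem: `G = ∇ₓE`, `H` the (invertible) Hessian of `E` in `x`. -/
theorem stmt_1 {N P : ℕ}
    (E L : EuclideanSpace ℝ (Fin N) × EuclideanSpace ℝ (Fin P) → ℝ)
    (G : EuclideanSpace ℝ (Fin N) × EuclideanSpace ℝ (Fin P) → EuclideanSpace ℝ (Fin N))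
    (x₀ : EuclideanSpace ℝ (Fin N)) (θ₀ : EuclideanSpace ℝ (Fin P))
    (hGrad : ∀ᶠ p in 𝓝 (x₀, θ₀), HasGradientAt (fun x => E (x, p.2)) (G p) p.1)
    (hC1 : ContDiffAt ℝ 1 G (x₀, θ₀))
    (hcrit : G (x₀, θ₀) = 0)
    (H : EuclideanSpace ℝ (Fin N) ≃L[ℝ] EuclideanSpace ℝ (Fin N))
    (hH : (H : EuclideanSpace ℝ (Fin N) →L[ℝ] EuclideanSpace ℝ (Fin N))
        = fderiv ℝ (fun x => G (x, θ₀)) x₀)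
    (xs : EuclideanSpace ℝ (Fin P) → EuclideanSpace ℝ (Fin N))
    (hxs₀ : xs θ₀ = x₀)
    (hxsC1 : ContDiffAt ℝ 1 xs θ₀)
    (hsol : ∀ᶠ θ in 𝓝 θ₀, G (xs θ, θ) = 0)
    (hL : ContDiffAt ℝ 1 L (x₀, θ₀)) :
    HasFDerivAt (fun θ => L (xs θ, θ))
      (-((fderiv ℝ (fun x => L (x, θ₀)) x₀).comp
          ((H.symm : EuclideanSpace ℝ (Fin N) →L[ℝ] EuclideanSpace ℝ (Fin N)).comp
            (fderiv ℝ (fun t => G (x₀, t)) θ₀)))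
        + fderiv ℝ (fun t => L (x₀, t)) θ₀) θ₀ := by
  subst hxs₀
  exact stmt_1_general (hC1.differentiableAt one_ne_zero) (hL.differentiableAt one_ne_zero)
    (hxsC1.differentiableAt one_ne_zero) H hH hsol
end

section
/- Let A : ℝ^N × ℝ^P → ℝ^N be continuously differentiable near (x₀, θ₀) with x₀ = A(x₀, θ₀), and suppose the operator norm of M := (∂A/∂x)(x₀, θ₀) satisfies ‖M‖ < 1. Then I − M is invertible, the local fixed point map x*(θ) with x*(θ₀) = x₀ is differentiable at θ₀, and its derivative is given by the convergent Neumann series dx*/dθ(θ₀) = Σ_{n=0}^{∞} Mⁿ · (∂A/∂θ)(x₀, θ₀), where Mⁿ denotes the n-fold composition of M with itself. -/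
open Filter Topology

/-!
The fixed point equation `x = A (x, θ)` is the zero set of `(θ, x) ↦ x - A (x, θ)`, whose partial
derivative in `x` is `I - M`. The implicit function theorem therefore gives a local fixed point map
with derivative `(I - M)⁻¹ ∘ B`, where `B` is the partial derivative of `A` in `θ`, and `‖M‖ < 1`
expands `(I - M)⁻¹` into the geometric series of `M`.
-/

section

variable {𝕜 E F G : Type*} [NontriviallyNormedField 𝕜]
  [NormedAddCommGroup E] [NormedSpace 𝕜 E]
  [NormedAddCommGroup F] [NormedSpace 𝕜 F]
  [NormedAddCommGroup G] [NormedSpace 𝕜 G]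

theorem isInvertible_id_sub_of_norm_lt_one [CompleteSpace E] {M : E →L[𝕜] E} (hM : ‖M‖ < 1) :
    (ContinuousLinearMap.id 𝕜 E - M).IsInvertible :=
  ⟨ContinuousLinearEquiv.ofUnit (Units.oneSub M hM), rfl⟩

theorem hasSum_pow_comp_of_norm_lt_one [CompleteSpace E] {M : E →L[𝕜] E} (hM : ‖M‖ < 1)
    (B : F →L[𝕜] E) :
    HasSum (fun n : ℕ => (M ^ n).comp B) ((ContinuousLinearMap.id 𝕜 E - M).inverse.comp B) := by
  have hgeom : HasSum (fun n : ℕ => M ^ n) (ContinuousLinearMap.id 𝕜 E - M).inverse := by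
    rw [← ContinuousLinearMap.ringInverse_eq_inverse]
    exact hasSum_geom_series_inverse M hM
  exact ((ContinuousLinearMap.compL 𝕜 F E E).flip B).hasSum hgeom

theorem fderiv_eq_coprod_fderiv_partial {A : E × F → G} {x₀ : E} {θ₀ : F}
    (hA : DifferentiableAt 𝕜 A (x₀, θ₀)) :
    fderiv 𝕜 A (x₀, θ₀) =
      (fderiv 𝕜 (fun x => A (x, θ₀)) x₀).coprod (fderiv 𝕜 (fun θ => A (x₀, θ)) θ₀) := by
  have hx : fderiv 𝕜 (fun x => A (x, θ₀)) x₀ = fderiv 𝕜 A (x₀, θ₀) ∘L .inl 𝕜 E F :=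
    (HasFDerivAt.comp x₀ hA.hasFDerivAt (hasFDerivAt_prodMk_left x₀ θ₀)).fderiv
  have hθ : fderiv 𝕜 (fun θ => A (x₀, θ)) θ₀ = fderiv 𝕜 A (x₀, θ₀) ∘L .inr 𝕜 E F :=
    (HasFDerivAt.comp θ₀ hA.hasFDerivAt (hasFDerivAt_prodMk_right x₀ θ₀)).fderiv
  rw [hx, hθ, ContinuousLinearMap.coprod_comp_inl_inr]

variable [CompleteSpace E] [CompleteSpace F]
  {A : E × F → E} {x₀ : E} {θ₀ : F} {M : E →L[𝕜] E} {B : F →L[𝕜] E}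

theorem exists_fixedPointMap_hasStrictFDerivAt
    (hA : HasStrictFDerivAt A (M.coprod B) (x₀, θ₀)) (hfix : x₀ = A (x₀, θ₀))
    (hinv : (ContinuousLinearMap.id 𝕜 E - M).IsInvertible) :
    ∃ xs : F → E, xs θ₀ = x₀ ∧ (∀ᶠ θ in 𝓝 θ₀, xs θ = A (xs θ, θ)) ∧
      HasStrictFDerivAt xs ((ContinuousLinearMap.id 𝕜 E - M).inverse.comp B) θ₀ := by
  let f : F × E → E := fun p => p.2 - A (p.2, p.1)
  let f' : F × E →L[𝕜] E := (-B).coprod (.id 𝕜 E - M)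
  have hf : HasStrictFDerivAt f f' (θ₀, x₀) := by
    have hswap : HasStrictFDerivAt (fun p : F × E => (p.2, p.1)) _ (θ₀, x₀) :=
      hasStrictFDerivAt_snd (𝕜 := 𝕜).prodMk hasStrictFDerivAt_fst
    refine (hasStrictFDerivAt_snd.sub (hA.comp (θ₀, x₀) hswap)).congr_fderiv ?_
    ext <;> simp [f']
  have hf_zero : f (θ₀, x₀) = 0 := sub_eq_zero.mpr hfix
  have hinr : f' ∘L .inr 𝕜 F E = .id 𝕜 E - M := ContinuousLinearMap.coprod_comp_inr ..
  have hinl : f' ∘L .inl 𝕜 F E = -B := ContinuousLinearMap.coprod_comp_inl ..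
  have hinv_inr : (f' ∘L .inr 𝕜 F E).IsInvertible := hinr ▸ hinv
  refine ⟨hf.implicitFunctionOfProdDomain hinv_inr, ?_, ?_, ?_⟩
  · exact (hf.eventually_apply_eq_iff_implicitFunctionOfProdDomain hinv_inr).self_of_nhds.mp rfl
  · filter_upwards [hf.eventually_apply_implicitFunctionOfProdDomain hinv_inr] with θ hθ
    exact sub_eq_zero.mp (hθ.trans hf_zero)
  · simpa [hinr, hinl] using hf.hasStrictFDerivAt_implicitFunctionOfProdDomain hinv_inr

theorem stmt_3_general (hA : HasStrictFDerivAt A (M.coprod B) (x₀, θ₀))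
    (hfix : x₀ = A (x₀, θ₀)) (hnorm : ‖M‖ < 1) :
    (ContinuousLinearMap.id 𝕜 E - M).IsInvertible ∧
    Summable (fun n : ℕ => (M ^ n).comp B) ∧
    ∃ xs : F → E, xs θ₀ = x₀ ∧ (∀ᶠ θ in 𝓝 θ₀, xs θ = A (xs θ, θ)) ∧
      HasStrictFDerivAt xs (∑' n : ℕ, (M ^ n).comp B) θ₀ := by
  have hinv := isInvertible_id_sub_of_norm_lt_one hnorm
  have hsum := hasSum_pow_comp_of_norm_lt_one hnorm B
  refine ⟨hinv, hsum.summable, ?_⟩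
  rw [hsum.tsum_eq]
  exact exists_fixedPointMap_hasStrictFDerivAt hA hfix hinv

end

/-- If the spectral/operator norm of `M = ∂A/∂x(x₀,θ₀)` is `< 1`, then `I - M` is
invertible and the derivative of the local fixed point map is given by the convergent
Neumann series `∑ Mⁿ ∘ ∂A/∂θ(x₀,θ₀)`. -/
theorem stmt_3 {N P : ℕ}
    (A : EuclideanSpace ℝ (Fin N) × EuclideanSpace ℝ (Fin P) → EuclideanSpace ℝ (Fin N))
    (x₀ : EuclideanSpace ℝ (Fin N)) (θ₀ : EuclideanSpace ℝ (Fin P))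
    (hC1 : ContDiffAt ℝ 1 A (x₀, θ₀))
    (hfix : x₀ = A (x₀, θ₀))
    (M : EuclideanSpace ℝ (Fin N) →L[ℝ] EuclideanSpace ℝ (Fin N))
    (hM : M = fderiv ℝ (fun x => A (x, θ₀)) x₀)
    (hnorm : ‖M‖ < 1) :
    (∃ J : EuclideanSpace ℝ (Fin N) ≃L[ℝ] EuclideanSpace ℝ (Fin N),
      (J : EuclideanSpace ℝ (Fin N) →L[ℝ] EuclideanSpace ℝ (Fin N))
        = ContinuousLinearMap.id ℝ (EuclideanSpace ℝ (Fin N)) - M) ∧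
    Summable (fun n : ℕ => (M ^ n).comp (fderiv ℝ (fun t => A (x₀, t)) θ₀)) ∧
    ∃ U ∈ 𝓝 θ₀, ∃ xs : EuclideanSpace ℝ (Fin P) → EuclideanSpace ℝ (Fin N),
      xs θ₀ = x₀ ∧ (∀ θ ∈ U, xs θ = A (xs θ, θ)) ∧
      HasFDerivAt xs
        (∑' n : ℕ, (M ^ n).comp (fderiv ℝ (fun t => A (x₀, t)) θ₀)) θ₀ := by
  have hA : HasStrictFDerivAt A (M.coprod (fderiv ℝ (fun t => A (x₀, t)) θ₀)) (x₀, θ₀) := by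
    rw [hM, ← fderiv_eq_coprod_fderiv_partial (hC1.differentiableAt one_ne_zero)]
    exact hC1.hasStrictFDerivAt one_ne_zero
  obtain ⟨hinv, hsum, xs, hxs₀, hxs, hderiv⟩ := stmt_3_general hA hfix hnorm
  exact ⟨hinv, hsum, _, hxs, xs, hxs₀, fun _ hθ => hθ, hderiv.hasFDerivAt⟩
end

section
/- Let X ⊂ ℝ^N be a compact convex set with nonempty interior, and let ψ : X → ℝ be continuous on X, strictly convex, and differentiable on int X, with the essential smoothness property that ‖∇ψ(x_k)‖ → ∞ for every sequence (x_k) in int X converging to a boundary point of X. Let c ∈ ℝ^N, α > 0, and x̄ ∈ int X. Then the function x ↦ α⟨c, x⟩ + D_ψ(x, x̄) attains a unique minimizer x* over X, this minimizer lies in the interior int X, and it is characterized by the equation ∇ψ(x*) = ∇ψ(x̄) − α c. -/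
open Filter Topology
open scoped RealInnerProductSpace

/-!
A minimizer `y` of a convex function `φ` over `X` cannot lie on the boundary if the gradient blows
up there. Move from `y` along the segment towards an interior point `x₀`. By the subgradient
inequality the gradient `G` at a point `u` of this segment satisfies `0 ≤ ⟪G, x₀ - u⟫`, since `φ`
does not decrease away from its minimizer. Testing the subgradient inequality at the point
`x₀ + r G / ‖G‖` of a ball on which `φ ≤ M` then gives `r ‖G‖ ≤ M - φ y`, a bound that does not
depend on `u`. Hence the minimizers are exactly the interior critical points, and adding an affine
function to `φ` only shifts the gradient by a constant.
-/

section

variable {E : Type*} [NormedAddCommGroup E] [InnerProductSpace ℝ E]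

theorem convexOn_inner_add_const {X : Set E} (hX : Convex ℝ X) (v : E) (b : ℝ) :
    ConvexOn ℝ X fun x => ⟪v, x⟫ + b :=
  ((innerₗ E v).convexOn hX).add_const b

theorem exists_mem_closedBall_inner_eq_mul_norm (x v : E) {r : ℝ} (hr : 0 ≤ r) :
    ∃ z ∈ Metric.closedBall x r, ⟪v, z - x⟫ = r * ‖v‖ := by
  rcases eq_or_ne v 0 with rfl | hv
  · exact ⟨x, Metric.mem_closedBall_self hr, by simp⟩
  · have hv' : ‖v‖ ≠ 0 := norm_ne_zero_iff.2 hv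
    refine ⟨x + (r / ‖v‖) • v, ?_, ?_⟩
    · rw [mem_closedBall_iff_norm, add_sub_cancel_left, norm_smul, norm_div, norm_norm,
        Real.norm_of_nonneg hr, div_mul_cancel₀ _ hv']
    · rw [add_sub_cancel_left, real_inner_smul_right, real_inner_self_eq_norm_mul_norm]
      field_simp

theorem lineMap_mem_interior {V : Type*} [AddCommGroup V] [Module ℝ V] [TopologicalSpace V]
    [IsTopologicalAddGroup V] [ContinuousConstSMul ℝ V] {X : Set V} (hX : Convex ℝ X) {x y : V}
    (hx : x ∈ X) (hy : y ∈ interior X) {t : ℝ} (ht : t ∈ Set.Ioc 0 1) :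
    AffineMap.lineMap x y t ∈ interior X := by
  rw [AffineMap.lineMap_apply_module', add_comm]
  exact hX.add_smul_sub_mem_interior hx hy ht

theorem exists_closedBall_subset_forall_le {α : Type*} [PseudoMetricSpace α] {X : Set α} {φ : α → ℝ}
    {x₀ : α} {M : ℝ} (hx₀ : x₀ ∈ interior X) (hφ : ContinuousAt φ x₀) (hM : φ x₀ < M) :
    ∃ r > 0, Metric.closedBall x₀ r ⊆ X ∧ ∀ z ∈ Metric.closedBall x₀ r, φ z ≤ M := by
  obtain ⟨r, hr, hball⟩ := Metric.nhds_basis_closedBall.mem_iff.1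
    (inter_mem (mem_interior_iff_mem_nhds.1 hx₀) (hφ.eventually_le_const hM))
  exact ⟨r, hr, fun z hz => (hball hz).1, fun z hz => (hball hz).2⟩

theorem tendsto_nhdsWithin_of_forall_seq {α β : Type*} [TopologicalSpace α]
    [FirstCountableTopology α] {f : α → β} {s : Set α} {a : α} {l : Filter β}
    (h : ∀ u : ℕ → α, (∀ k, u k ∈ s) → Tendsto u atTop (𝓝 a) → Tendsto (f ∘ u) atTop l) :
    Tendsto f (𝓝[s] a) l := by
  refine tendsto_of_seq_tendsto fun u hu => ?_
  obtain ⟨hua, hus⟩ := tendsto_nhdsWithin_iff.1 hu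
  obtain ⟨n, hn⟩ := eventually_atTop.1 hus
  exact (tendsto_add_atTop_iff_nat n).1
    (h (fun k => u (k + n)) (fun k => hn _ (Nat.le_add_left n k))
      ((tendsto_add_atTop_iff_nat n).2 hua))

variable [CompleteSpace E] {X : Set E} {φ : E → ℝ} {G x₀ u y z : E}

theorem add_inner_gradient_le_of_convexOn (hφ : ConvexOn ℝ X φ) (hu : u ∈ X) (hz : z ∈ X)
    (hG : HasGradientAt φ G u) : φ u + ⟪G, z - u⟫ ≤ φ z := by
  let line : ℝ →ᵃ[ℝ] E := AffineMap.lineMap u z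
  have hconv : ConvexOn ℝ (line ⁻¹' X) (φ ∘ line) := hφ.comp_affineMap line
  have hderiv : HasDerivAt (φ ∘ line) ⟪G, z - u⟫ 0 := by
    have hG' : HasFDerivAt φ (InnerProductSpace.toDual ℝ E G) (line 0) := by
      simpa [line] using hG.hasFDerivAt
    simpa using hG'.comp_hasDerivAt (0 : ℝ) AffineMap.hasDerivAt_lineMap
  have hslope : ⟪G, z - u⟫ ≤ slope (φ ∘ line) 0 1 :=
    hconv.le_slope_of_hasDerivAt (by simpa [line] using hu) (by simpa [line] using hz)
      one_pos hderiv
  have hslope_eq : slope (φ ∘ line) 0 1 = φ z - φ u := by simp [slope_def_field, line]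
  linarith

theorem isMinOn_of_convexOn_of_hasGradientAt_zero (hφ : ConvexOn ℝ X φ) (hu : u ∈ X)
    (h0 : HasGradientAt φ 0 u) : IsMinOn φ X u := fun z hz => by
  simpa using add_inner_gradient_le_of_convexOn hφ hu hz h0

theorem gradient_eq_zero_of_isLocalMin (hmin : IsLocalMin φ u) (hG : HasGradientAt φ G u) :
    G = 0 :=
  (InnerProductSpace.toDual ℝ E).map_eq_zero_iff.1 (hmin.hasFDerivAt_eq_zero hG.hasFDerivAt)

theorem inner_gradient_lineMap_nonneg_of_isMinOn (hφ : ConvexOn ℝ X φ) (hy : y ∈ X)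
    (hmin : IsMinOn φ X y) {t : ℝ} (ht : t ∈ Set.Ioc 0 1) (hu : AffineMap.lineMap y x₀ t ∈ X)
    (hG : HasGradientAt φ G (AffineMap.lineMap y x₀ t)) :
    0 ≤ ⟪G, x₀ - AffineMap.lineMap y x₀ t⟫ := by
  have hback : ⟪G, y - AffineMap.lineMap y x₀ t⟫ ≤ 0 := by
    linarith [add_inner_gradient_le_of_convexOn hφ hu hy hG, isMinOn_iff.1 hmin _ hu]
  rw [← vsub_eq_sub, AffineMap.left_vsub_lineMap, real_inner_smul_right] at hback
  rw [← vsub_eq_sub, AffineMap.right_vsub_lineMap, real_inner_smul_right]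
  have hdir : ⟪G, y -ᵥ x₀⟫ ≤ 0 := nonpos_of_mul_nonpos_right hback ht.1
  rw [← neg_vsub_eq_vsub_rev, inner_neg_right]
  exact mul_nonneg (sub_nonneg.2 ht.2) (neg_nonneg.2 hdir)

theorem mul_norm_gradient_le_of_inner_nonneg (hφ : ConvexOn ℝ X φ) {r M : ℝ} (hr : 0 ≤ r)
    (hball : Metric.closedBall x₀ r ⊆ X) (hM : ∀ z ∈ Metric.closedBall x₀ r, φ z ≤ M)
    (hu : u ∈ X) (hG : HasGradientAt φ G u) (hnonneg : 0 ≤ ⟪G, x₀ - u⟫) :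
    r * ‖G‖ ≤ M - φ u := by
  obtain ⟨z, hz, hGz⟩ := exists_mem_closedBall_inner_eq_mul_norm x₀ G hr
  have hsub : φ u + ⟪G, z - u⟫ ≤ φ z := add_inner_gradient_le_of_convexOn hφ hu (hball hz) hG
  rw [← sub_add_sub_cancel z x₀ u, inner_add_right, hGz] at hsub
  linarith [hM z hz]

theorem exists_norm_gradient_lineMap_le_of_isMinOn (hφ : ConvexOn ℝ X φ) {g : E → E}
    (hg : ∀ x ∈ interior X, HasGradientAt φ (g x) x) (hx₀ : x₀ ∈ interior X) (hy : y ∈ X)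
    (hmin : IsMinOn φ X y) :
    ∃ C, ∀ t ∈ Set.Ioc (0 : ℝ) 1, ‖g (AffineMap.lineMap y x₀ t)‖ ≤ C := by
  obtain ⟨r, hr, hball, hM⟩ :=
    exists_closedBall_subset_forall_le hx₀ (hg x₀ hx₀).continuousAt (lt_add_one (φ x₀))
  refine ⟨(φ x₀ + 1 - φ y) / r, fun t ht => ?_⟩
  have hu : AffineMap.lineMap y x₀ t ∈ interior X :=
    lineMap_mem_interior hφ.1 hy hx₀ ht
  have huX := interior_subset hu
  have hbound := mul_norm_gradient_le_of_inner_nonneg hφ hr.le hball hM huX (hg _ hu)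
    (inner_gradient_lineMap_nonneg_of_isMinOn hφ hy hmin ht huX (hg _ hu))
  rw [le_div_iff₀' hr]
  linarith [isMinOn_iff.1 hmin _ huX]

/-- Rockafellar's essential smoothness of a convex function `φ` on its domain `X`, except that
`interior X` may be empty: `φ` is differentiable on the interior, and its gradient `g` blows up at
the remaining points of `X`. The gradient is a parameter, and its values outside the interior are
arbitrary. -/
structure EssentiallySmoothOn (X : Set E) (φ : E → ℝ) (g : E → E) : Prop where
  convexOn : ConvexOn ℝ X φ
  hasGradientAt : ∀ x ∈ interior X, HasGradientAt φ (g x) x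
  tendsto_norm_gradient : ∀ y ∈ X \ interior X, Tendsto (fun x => ‖g x‖) (𝓝[interior X] y) atTop

namespace EssentiallySmoothOn

variable {g : E → E}

theorem add_inner_add_const (hφ : EssentiallySmoothOn X φ g) (v : E) (b : ℝ) :
    EssentiallySmoothOn X (fun x => φ x + (⟪v, x⟫ + b)) fun x => g x + v where
  convexOn := hφ.convexOn.add (convexOn_inner_add_const hφ.convexOn.1 v b)
  hasGradientAt x hx := by
    rw [hasGradientAt_iff_hasFDerivAt, map_add]
    exact (hφ.hasGradientAt x hx).hasFDerivAt.add
      ((InnerProductSpace.toDual ℝ E v).hasFDerivAt.add_const b)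
  tendsto_norm_gradient y hy := tendsto_norm_atTop_iff_cobounded.2 <|
    (tendsto_add_const_cobounded v).comp
      (tendsto_norm_atTop_iff_cobounded.1 (hφ.tendsto_norm_gradient y hy))

theorem mem_interior_of_isMinOn (hφ : EssentiallySmoothOn X φ g) (hX : (interior X).Nonempty)
    (hy : y ∈ X) (hmin : IsMinOn φ X y) : y ∈ interior X := by
  by_contra hnot
  obtain ⟨x₀, hx₀⟩ := hX
  obtain ⟨C, hC⟩ :=
    exists_norm_gradient_lineMap_le_of_isMinOn hφ.convexOn hφ.hasGradientAt hx₀ hy hmin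
  have hIoc : Set.Ioc (0 : ℝ) 1 ∈ 𝓝[>] 0 := Ioc_mem_nhdsGT one_pos
  have hsegment : Tendsto (AffineMap.lineMap y x₀ : ℝ → E) (𝓝[>] 0) (𝓝[interior X] y) := by
    refine tendsto_nhdsWithin_iff.2 ⟨?_, ?_⟩
    · exact (AffineMap.lineMap_continuous.tendsto' 0 y
        (AffineMap.lineMap_apply_zero y x₀)).mono_left nhdsWithin_le_nhds
    · filter_upwards [hIoc] with t ht
      exact lineMap_mem_interior hφ.convexOn.1 hy hx₀ ht
  have hblow := (hφ.tendsto_norm_gradient y ⟨hy, hnot⟩).comp hsegment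
  obtain ⟨t, hlarge, ht⟩ := ((hblow.eventually_gt_atTop C).and hIoc).exists
  exact (hC t ht).not_gt hlarge

theorem isMinOn_iff_mem_interior_and_gradient_eq_zero (hφ : EssentiallySmoothOn X φ g)
    (hX : (interior X).Nonempty) (hy : y ∈ X) :
    IsMinOn φ X y ↔ y ∈ interior X ∧ g y = 0 := by
  constructor
  · intro hmin
    have hyint := hφ.mem_interior_of_isMinOn hX hy hmin
    exact ⟨hyint, gradient_eq_zero_of_isLocalMin
      (hmin.isLocalMin (mem_interior_iff_mem_nhds.1 hyint)) (hφ.hasGradientAt y hyint)⟩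
  · rintro ⟨hyint, h0⟩
    exact isMinOn_of_convexOn_of_hasGradientAt_zero hφ.convexOn hy
      (h0 ▸ hφ.hasGradientAt y hyint)

theorem eq_of_isMinOn (hφ : EssentiallySmoothOn X φ g)
    (hstrict : StrictConvexOn ℝ (interior X) φ) (hX : (interior X).Nonempty)
    (hy : y ∈ X) (hz : z ∈ X) (hymin : IsMinOn φ X y) (hzmin : IsMinOn φ X z) : y = z :=
  hstrict.eq_of_isMinOn (hymin.on_subset interior_subset) (hzmin.on_subset interior_subset)
    (hφ.mem_interior_of_isMinOn hX hy hymin) (hφ.mem_interior_of_isMinOn hX hz hzmin)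

theorem exists_mem_interior_unique_minimizer (hφ : EssentiallySmoothOn X φ g)
    (hstrict : StrictConvexOn ℝ (interior X) φ) (hcomp : IsCompact X)
    (hlsc : LowerSemicontinuousOn φ X) (hX : (interior X).Nonempty) :
    ∃ y ∈ interior X, (∀ x ∈ X, φ y ≤ φ x) ∧ (∀ x ∈ X, φ x = φ y → x = y) ∧ g y = 0 ∧
      ∀ x ∈ interior X, g x = 0 → x = y := by
  obtain ⟨y, hy, hmin⟩ := hlsc.exists_isMinOn (hX.mono interior_subset) hcomp
  have huniq : ∀ x ∈ X, IsMinOn φ X x → x = y := fun x hx hxmin =>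
    hφ.eq_of_isMinOn hstrict hX hx hy hxmin hmin
  obtain ⟨hyint, hgy⟩ := (hφ.isMinOn_iff_mem_interior_and_gradient_eq_zero hX hy).1 hmin
  refine ⟨y, hyint, isMinOn_iff.1 hmin, fun x hx hxy => huniq x hx ?_, hgy, fun x hx hgx => ?_⟩
  · exact isMinOn_iff.2 fun z hz => hxy ▸ isMinOn_iff.1 hmin z hz
  · have hxX := interior_subset hx
    exact huniq x hxX
      ((hφ.isMinOn_iff_mem_interior_and_gradient_eq_zero hX hxX).2 ⟨hx, hgx⟩)

end EssentiallySmoothOn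

theorem stmt_10_general {X : Set E} (hXcomp : IsCompact X) {ψ : E → ℝ} {g : E → E}
    (hψ : EssentiallySmoothOn X ψ g) (hψlsc : LowerSemicontinuousOn ψ X)
    (hψstrict : StrictConvexOn ℝ (interior X) ψ) (c : E) (α : ℝ) {xbar : E}
    (hxbar : xbar ∈ interior X) :
    let F : E → ℝ := fun x => α * ⟪c, x⟫ + (ψ x - ψ xbar - ⟪g xbar, x - xbar⟫)
    ∃ xs ∈ interior X,
      (∀ x ∈ X, F xs ≤ F x) ∧
      (∀ x ∈ X, F x = F xs → x = xs) ∧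
      g xs = g xbar - α • c ∧
      (∀ y ∈ interior X, g y = g xbar - α • c → y = xs) := by
  intro F
  set v : E := α • c - g xbar with hv
  set b : ℝ := ⟪g xbar, xbar⟫ - ψ xbar with hb
  have hF : F = fun x => ψ x + (⟪v, x⟫ + b) := by
    funext x
    simp only [F, hv, hb, inner_sub_left, inner_sub_right, real_inner_smul_left]
    ring
  have hcrit : ∀ x, g x + v = 0 ↔ g x = g xbar - α • c := fun x => by
    rw [add_eq_zero_iff_eq_neg, hv, neg_sub]
  have hstrict : StrictConvexOn ℝ (interior X) fun x => ψ x + (⟪v, x⟫ + b) :=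
    hψstrict.add_convexOn (convexOn_inner_add_const hψstrict.1 v b)
  have hlsc : LowerSemicontinuousOn (fun x => ψ x + (⟪v, x⟫ + b)) X :=
    hψlsc.add (Continuous.continuousOn (by fun_prop)).lowerSemicontinuousOn
  simpa only [hF, hcrit] using (hψ.add_inner_add_const v b).exists_mem_interior_unique_minimizer
    hstrict hXcomp hlsc ⟨xbar, hxbar⟩

end

/-- For an essentially smooth, strictly convex Bregman generating function `ψ` on a
compact convex set `X` with nonempty interior (gradient `g` blowing up at the boundary),
the Bregman proximal problem `min_{x ∈ X} α⟨c,x⟩ + D_ψ(x, x̄)` with `x̄ ∈ int X` has a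
unique minimizer; it lies in `int X` and is characterized by `∇ψ(x*) = ∇ψ(x̄) - αc`. -/
theorem stmt_10 {N : ℕ} (X : Set (EuclideanSpace ℝ (Fin N)))
    (hXcomp : IsCompact X) (hXconv : Convex ℝ X) (hXint : (interior X).Nonempty)
    (ψ : EuclideanSpace ℝ (Fin N) → ℝ)
    (g : EuclideanSpace ℝ (Fin N) → EuclideanSpace ℝ (Fin N))
    (hψcont : ContinuousOn ψ X) (hψconv : StrictConvexOn ℝ X ψ)
    (hgrad : ∀ x ∈ interior X, HasGradientAt ψ (g x) x)
    (hblow : ∀ (u : ℕ → EuclideanSpace ℝ (Fin N)) (y : EuclideanSpace ℝ (Fin N)),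
      (∀ k, u k ∈ interior X) → y ∈ X \ interior X →
      Tendsto u atTop (𝓝 y) → Tendsto (fun k => ‖g (u k)‖) atTop atTop)
    (c : EuclideanSpace ℝ (Fin N)) (α : ℝ) (hα : 0 < α)
    (xbar : EuclideanSpace ℝ (Fin N)) (hxbar : xbar ∈ interior X) :
    let F : EuclideanSpace ℝ (Fin N) → ℝ := fun x =>
      α * ⟪c, x⟫ + (ψ x - ψ xbar - ⟪g xbar, x - xbar⟫)
    ∃ xs ∈ interior X,
      (∀ x ∈ X, F xs ≤ F x) ∧
      (∀ x ∈ X, F x = F xs → x = xs) ∧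
      g xs = g xbar - α • c ∧
      (∀ y ∈ interior X, g y = g xbar - α • c → y = xs) :=
  stmt_10_general hXcomp
    ⟨hψconv.convexOn, hgrad, fun y hy =>
      tendsto_nhdsWithin_of_forall_seq fun u hu => hblow u y hu hy⟩
    hψcont.lowerSemicontinuousOn (hψconv.subset interior_subset hXconv.interior) c α hxbar
end

section
/- Let a₁, …, a_M ∈ ℝ^N be nonzero vectors and b₁, …, b_M ∈ ℝ, and let X = {x ∈ ℝ^N : ⟨aᵢ, x⟩ ≤ bᵢ for all i = 1, …, M} be bounded with nonempty interior. Define ψ(x) = Σ_{i=1}^{M} (bᵢ − ⟨aᵢ, x⟩) log(bᵢ − ⟨aᵢ, x⟩) for x ∈ X (with 0·log 0 = 0). Then: (i) ψ is continuous on X; (ii) for every sequence (x_k) in int X converging to a point of the boundary ∂X = X \ int X, one has ‖∇ψ(x_k)‖ → ∞; and (iii) there exists m > 0 such that ψ is m-strongly convex on int X. -/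
open Filter Topology
open scoped RealInnerProductSpace

/-!
Strong convexity comes from `(t log t)'' = 1 / t`, which is at least `1 / S` as long as the slacks
`bᵢ - ⟨aᵢ, x⟩` stay below `S`, together with a lower bound `c ‖v‖² ≤ ∑ᵢ ⟨aᵢ, v⟩²`: boundedness of
the polyhedron forces the `aᵢ` to span the space.

For the gradient, fix an interior point `z` with slacks `σᵢ`. If `x` has slacks `sᵢ`, then
`⟨∇ψ(x), x - z⟩ = ∑ᵢ (log sᵢ + 1) (sᵢ - σᵢ)`. As `x` approaches the boundary some `sⱼ` tends to `0`
and the `j`-th term to `+∞`, while monotonicity of `log` bounds every other term below by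
`(log σᵢ + 1) (sᵢ - σᵢ)`, which converges.
-/

section StrongConvexity

theorem strongConvexOn_mul_log_Icc (S : ℝ) :
    StrongConvexOn (Set.Icc 0 S) S⁻¹ (fun t => t * Real.log t) := by
  rw [strongConvexOn_iff_convex]
  refine convexOn_of_hasDerivWithinAt2_nonneg (convex_Icc 0 S)
    (f' := fun t => Real.log t + 1 - S⁻¹ * t) (f'' := fun t => t⁻¹ - S⁻¹)
    (Real.continuous_mul_log.sub (by fun_prop)).continuousOn ?_ ?_ ?_ <;>
    rw [interior_Icc] <;> intro t ht
  · have hquad : HasDerivAt (fun t : ℝ => S⁻¹ / 2 * ‖t‖ ^ 2) (S⁻¹ * t) t := by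
      simp only [Real.norm_eq_abs, sq_abs]
      exact ((hasDerivAt_pow 2 t).const_mul (S⁻¹ / 2)).congr_deriv (by push_cast; ring)
    exact ((Real.hasDerivAt_mul_log ht.1.ne').sub hquad).hasDerivWithinAt
  · have hlin : HasDerivAt (fun t : ℝ => S⁻¹ * t) S⁻¹ t := by
      simpa using (hasDerivAt_id t).const_mul S⁻¹
    exact (((Real.hasDerivAt_log ht.1.ne').add_const 1).sub hlin).hasDerivWithinAt
  · exact sub_nonneg.2 (inv_anti₀ ht.1 ht.2.le)

theorem strongConvexOn_sum_comp_affineMap {ι E : Type*} [Fintype ι] [NormedAddCommGroup E]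
    [NormedSpace ℝ E] {F : ι → Type*} [∀ i, NormedAddCommGroup (F i)] [∀ i, NormedSpace ℝ (F i)]
    {s : Set E} {T : ∀ i, Set (F i)} {φ : ∀ i, F i → ℝ} {μ : ι → ℝ} {m : ℝ} {l : ∀ i, E →ᵃ[ℝ] F i}
    (hs : Convex ℝ s) (hφ : ∀ i, StrongConvexOn (T i) (μ i) (φ i))
    (hl : ∀ i, Set.MapsTo (l i) s (T i))
    (hm : ∀ x ∈ s, ∀ y ∈ s, m * ‖x - y‖ ^ 2 ≤ ∑ i, μ i * ‖l i x - l i y‖ ^ 2) :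
    StrongConvexOn s m (fun x => ∑ i, φ i (l i x)) := by
  refine ⟨hs, fun x hx y hy p q hp hq hpq => ?_⟩
  calc ∑ i, φ i (l i (p • x + q • y))
      = ∑ i, φ i (p • l i x + q • l i y) := by simp only [Convex.combo_affine_apply hpq]
    _ ≤ ∑ i, (p • φ i (l i x) + q • φ i (l i y)
          - p * q * (μ i / 2 * ‖l i x - l i y‖ ^ 2)) :=
        Finset.sum_le_sum fun i _ => (hφ i).2 (hl i hx) (hl i hy) hp hq hpq
    _ = p • ∑ i, φ i (l i x) + q • ∑ i, φ i (l i y)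
          - p * q * ((∑ i, μ i * ‖l i x - l i y‖ ^ 2) / 2) := by
        simp only [Finset.sum_sub_distrib, Finset.sum_add_distrib, Finset.smul_sum,
          Finset.mul_sum, Finset.sum_div, div_mul_eq_mul_div]
    _ ≤ p • ∑ i, φ i (l i x) + q • ∑ i, φ i (l i y) - p * q * (m / 2 * ‖x - y‖ ^ 2) := by
        rw [div_mul_eq_mul_div]
        gcongr
        exact hm x hx y hy

end StrongConvexity

theorem tendsto_norm_atTop_of_tendsto_inner_atTop {α E : Type*} [NormedAddCommGroup E]
    [InnerProductSpace ℝ E] {l : Filter α} {g v : α → E}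
    (hv : IsBoundedUnder (· ≤ ·) l (fun k => ‖v k‖))
    (hgv : Tendsto (fun k => ⟪g k, v k⟫) l atTop) : Tendsto (fun k => ‖g k‖) l atTop := by
  obtain ⟨C, hC⟩ := hv
  have hpos : 0 < max C 1 := lt_max_of_lt_right one_pos
  refine tendsto_atTop_mono' l ?_ (hgv.atTop_div_const hpos)
  filter_upwards [hC] with k hk
  rw [div_le_iff₀ hpos]
  calc ⟪g k, v k⟫ ≤ ‖g k‖ * ‖v k‖ := real_inner_le_norm _ _
    _ ≤ ‖g k‖ * max C 1 := by gcongr; exact le_max_of_le_left hk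

theorem log_add_one_mul_sub_le {s t : ℝ} (hs : 0 < s) (ht : 0 < t) :
    (Real.log t + 1) * (s - t) ≤ (Real.log s + 1) * (s - t) := by
  rcases le_total s t with h | h
  · exact mul_le_mul_of_nonpos_right (by gcongr) (sub_nonpos.2 h)
  · exact mul_le_mul_of_nonneg_right (by gcongr) (sub_nonneg.2 h)

theorem tendsto_log_add_one_mul_sub_nhdsGT_zero {t : ℝ} (ht : 0 < t) :
    Tendsto (fun s => (Real.log s + 1) * (s - t)) (𝓝[>] 0) atTop := by
  have hlog : Tendsto (fun s => Real.log s + 1) (𝓝[>] 0) atBot :=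
    tendsto_atBot_add_const_right _ 1 Real.tendsto_log_nhdsGT_zero
  have hsub : Tendsto (fun s : ℝ => s - t) (𝓝[>] 0) (𝓝 (0 - t)) :=
    (tendsto_id.mono_left nhdsWithin_le_nhds).sub_const t
  exact hlog.atBot_mul_neg (by linarith) hsub

theorem interior_setOf_inner_le {E : Type*} [NormedAddCommGroup E] [InnerProductSpace ℝ E] {a : E}
    (ha : a ≠ 0) (b : ℝ) : interior {x | ⟪a, x⟫ ≤ b} = {x | ⟪a, x⟫ < b} := by
  have hne : innerₗ E a ≠ 0 := fun h => ha (inner_self_eq_zero.1 (LinearMap.congr_fun h a))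
  have hopen : IsOpenMap fun x => ⟪a, x⟫ :=
    LinearMap.isOpenMap_of_finiteDimensional _ (LinearMap.surjective hne)
  have hpreimage := hopen.preimage_interior_eq_interior_preimage (by fun_prop) (Set.Iic b)
  rw [interior_Iic] at hpreimage
  exact hpreimage.symm

theorem exists_pos_mul_sq_norm_le_sum_sq_inner {ι E : Type*} [Fintype ι] [NormedAddCommGroup E]
    [InnerProductSpace ℝ E] {a : ι → E} (ha : ∀ v, (∀ i, ⟪a i, v⟫ = 0) → v = 0) :
    ∃ c > 0, ∀ v, c * ‖v‖ ^ 2 ≤ ∑ i, ⟪a i, v⟫ ^ 2 := by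
  let f : E →ₗ[ℝ] EuclideanSpace ℝ ι :=
    (WithLp.linearEquiv 2 ℝ (ι → ℝ)).symm.toLinearMap ∘ₗ LinearMap.pi fun i => innerₗ E (a i)
  have hf_apply (v : E) (i : ι) : f v i = ⟪a i, v⟫ := rfl
  have hker : f.ker = ⊥ := LinearMap.ker_eq_bot'.2 fun v hv =>
    ha v fun i => by rw [← hf_apply, hv, PiLp.zero_apply]
  have : FiniteDimensional ℝ E := .of_injective f (LinearMap.ker_eq_bot.1 hker)
  obtain ⟨K, hK, hf⟩ := f.exists_antilipschitzWith hker
  refine ⟨((K : ℝ) ^ 2)⁻¹, inv_pos.2 (pow_pos (NNReal.coe_pos.2 hK) 2), fun v => ?_⟩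
  have hnorm : ‖v‖ ≤ K * ‖f v‖ := by simpa using hf.le_mul_dist v 0
  calc ((K : ℝ) ^ 2)⁻¹ * ‖v‖ ^ 2 ≤ ((K : ℝ) ^ 2)⁻¹ * (K * ‖f v‖) ^ 2 := by gcongr
    _ = ‖f v‖ ^ 2 := by field_simp
    _ = ∑ i, ⟪a i, v⟫ ^ 2 := by simp only [EuclideanSpace.real_norm_sq_eq, hf_apply]

section Polyhedron

variable {ι E : Type*} [NormedAddCommGroup E] [InnerProductSpace ℝ E] {a : ι → E} {b : ι → ℝ}

/-- The polyhedron cut out by the inequalities `⟪a i, x⟫ ≤ b i`; `b i - ⟪a i, x⟫` is the slack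
of the `i`-th constraint at `x`. -/
def polyhedron (a : ι → E) (b : ι → ℝ) : Set E := {x | ∀ i, ⟪a i, x⟫ ≤ b i}

theorem convex_polyhedron : Convex ℝ (polyhedron a b) := by
  simp only [polyhedron, Set.ofPred_forall]
  exact convex_iInter fun i => convex_halfSpace_le (innerₗ E (a i)).isLinear (b i)

theorem mem_interior_polyhedron_iff [Finite ι] (ha : ∀ i, a i ≠ 0) {x : E} :
    x ∈ interior (polyhedron a b) ↔ ∀ i, ⟪a i, x⟫ < b i := by
  simp only [polyhedron, Set.ofPred_forall, interior_iInter_of_finite,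
    interior_setOf_inner_le (ha _), Set.mem_iInter, Set.mem_ofPred_eq]

theorem exists_inner_eq_of_mem_polyhedron_diff_interior [Finite ι] (ha : ∀ i, a i ≠ 0) {y : E}
    (hy : y ∈ polyhedron a b \ interior (polyhedron a b)) : ∃ j, ⟪a j, y⟫ = b j := by
  by_contra! hne
  exact hy.2 ((mem_interior_polyhedron_iff ha).2 fun i => (hy.1 i).lt_of_ne (hne i))

theorem eq_zero_of_isBounded_polyhedron_of_inner_nonpos
    (hbdd : Bornology.IsBounded (polyhedron a b)) (hne : (polyhedron a b).Nonempty) {v : E}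
    (hv : ∀ i, ⟪a i, v⟫ ≤ 0) : v = 0 := by
  obtain ⟨z, hz⟩ := hne
  obtain ⟨R, hR, hnorm⟩ := hbdd.exists_pos_norm_le
  by_contra hv0
  have hvpos : 0 < ‖v‖ := norm_pos_iff.2 hv0
  set t := (R + ‖z‖ + 1) / ‖v‖ with ht
  have ht0 : 0 ≤ t := by positivity
  have hmem : z + t • v ∈ polyhedron a b := fun i => by
    rw [inner_add_right, inner_smul_right]
    linarith [hz i, mul_nonpos_of_nonneg_of_nonpos ht0 (hv i)]
  have hlarge : R + ‖z‖ + 1 ≤ ‖z + t • v‖ + ‖z‖ :=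
    calc R + ‖z‖ + 1 = ‖t • v‖ := by
          rw [norm_smul, Real.norm_of_nonneg ht0, ht, div_mul_cancel₀ _ hvpos.ne']
      _ = ‖z + t • v - z‖ := by rw [add_sub_cancel_left]
      _ ≤ ‖z + t • v‖ + ‖z‖ := norm_sub_le _ _
  linarith [hnorm _ hmem]

theorem exists_pos_forall_slack_le [Finite ι] (hbdd : Bornology.IsBounded (polyhedron a b)) :
    ∃ S > 0, ∀ x ∈ polyhedron a b, ∀ i, b i - ⟪a i, x⟫ ≤ S := by
  obtain ⟨R, -, hnorm⟩ := hbdd.exists_pos_norm_le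
  obtain ⟨S, hS, hpos⟩ := ((eventually_all.2 fun i => eventually_ge_atTop (b i + ‖a i‖ * R)).and
    (eventually_gt_atTop 0)).exists
  refine ⟨S, hpos, fun x hx i => ?_⟩
  calc b i - ⟪a i, x⟫ ≤ b i + ‖a i‖ * ‖x‖ := by
        linarith [neg_le_of_abs_le (abs_real_inner_le_norm (a i) x)]
    _ ≤ b i + ‖a i‖ * R := by gcongr; exact hnorm x hx
    _ ≤ S := hS i

end Polyhedron

section Entropy

variable {ι E : Type*} [Fintype ι] [NormedAddCommGroup E] [InnerProductSpace ℝ E]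
  {a : ι → E} {b : ι → ℝ}

/-- The entropy generating function of `polyhedron a b`. It is defined on the whole space, but is
meaningful only on the polyhedron, since `Real.log` of a negative number is a junk value. -/
noncomputable def polyhedralEntropy (a : ι → E) (b : ι → ℝ) (x : E) : ℝ :=
  ∑ i, (b i - ⟪a i, x⟫) * Real.log (b i - ⟪a i, x⟫)

theorem continuous_polyhedralEntropy : Continuous (polyhedralEntropy a b) :=
  continuous_finsetSum _ fun i _ => Real.continuous_mul_log.comp
    (by fun_prop : Continuous fun x => b i - ⟪a i, x⟫)

theorem exists_strongConvexOn_polyhedralEntropy (hbdd : Bornology.IsBounded (polyhedron a b)) :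
    ∃ m > 0, StrongConvexOn (polyhedron a b) m (polyhedralEntropy a b) := by
  rcases (polyhedron a b).eq_empty_or_nonempty with hempty | hne
  · exact ⟨1, one_pos, by simp [hempty, StrongConvexOn, UniformConvexOn, convex_empty]⟩
  obtain ⟨S, hS, hslack⟩ := exists_pos_forall_slack_le hbdd
  obtain ⟨c, hc, hquad⟩ := exists_pos_mul_sq_norm_le_sum_sq_inner fun v hv =>
    eq_zero_of_isBounded_polyhedron_of_inner_nonpos hbdd hne fun i => (hv i).le
  refine ⟨S⁻¹ * c, by positivity, strongConvexOn_sum_comp_affineMap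
    (l := fun i => AffineMap.const ℝ E (b i) - (innerₗ E (a i)).toAffineMap) convex_polyhedron
    (fun _ => strongConvexOn_mul_log_Icc S)
    (fun i x hx => ⟨sub_nonneg.2 (hx i), hslack x hx i⟩) fun x _ y _ => ?_⟩
  calc S⁻¹ * c * ‖x - y‖ ^ 2 ≤ S⁻¹ * ∑ i, ⟪a i, x - y⟫ ^ 2 := by
        rw [mul_assoc]
        gcongr
        exact hquad (x - y)
    _ = ∑ i, S⁻¹ * ‖(b i - ⟪a i, x⟫) - (b i - ⟪a i, y⟫)‖ ^ 2 := by
        simp only [Finset.mul_sum, sub_sub_sub_cancel_left, inner_sub_right, Real.norm_eq_abs,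
          sq_abs, sub_sq_comm]

theorem hasGradientAt_polyhedralEntropy [CompleteSpace E] {x : E} (hx : ∀ i, b i - ⟪a i, x⟫ ≠ 0) :
    HasGradientAt (polyhedralEntropy a b)
      (-∑ i, (Real.log (b i - ⟪a i, x⟫) + 1) • a i) x := by
  have hterm (i : ι) : HasFDerivAt (fun x => (b i - ⟪a i, x⟫) * Real.log (b i - ⟪a i, x⟫))
      ((Real.log (b i - ⟪a i, x⟫) + 1) • -innerSL ℝ (a i)) x :=
    HasDerivAt.comp_hasFDerivAt (f := fun x => b i - ⟪a i, x⟫) x (Real.hasDerivAt_mul_log (hx i))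
      ((innerSL ℝ (a i)).hasFDerivAt.const_sub (b i))
  rw [hasGradientAt_iff_hasFDerivAt]
  refine (HasFDerivAt.fun_sum fun i _ => hterm i).congr_fderiv ?_
  ext v
  simp

theorem inner_gradient_polyhedralEntropy_sub [CompleteSpace E] {x : E}
    (hx : ∀ i, b i - ⟪a i, x⟫ ≠ 0) (z : E) :
    ⟪gradient (polyhedralEntropy a b) x, x - z⟫ =
      ∑ i, (Real.log (b i - ⟪a i, x⟫) + 1) * ((b i - ⟪a i, x⟫) - (b i - ⟪a i, z⟫)) := by
  rw [(hasGradientAt_polyhedralEntropy hx).gradient, inner_neg_left, sum_inner,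
    ← Finset.sum_neg_distrib]
  refine Finset.sum_congr rfl fun i _ => ?_
  rw [real_inner_smul_left, inner_sub_right]
  ring

theorem tendsto_norm_gradient_polyhedralEntropy [CompleteSpace E] (ha : ∀ i, a i ≠ 0) {y : E}
    (hy : y ∈ polyhedron a b \ interior (polyhedron a b)) :
    Tendsto (fun x => ‖gradient (polyhedralEntropy a b) x‖) (𝓝[interior (polyhedron a b)] y)
      atTop := by
  classical
  rcases (interior (polyhedron a b)).eq_empty_or_nonempty with hempty | ⟨z, hz⟩
  · simp [hempty]
  have hpos {x : E} (hx : x ∈ interior (polyhedron a b)) (i : ι) : 0 < b i - ⟪a i, x⟫ :=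
    sub_pos.2 ((mem_interior_polyhedron_iff ha).1 hx i)
  obtain ⟨j, hj⟩ := exists_inner_eq_of_mem_polyhedron_diff_interior ha hy
  have hslack (i : ι) : Tendsto (fun x => b i - ⟪a i, x⟫) (𝓝[interior (polyhedron a b)] y)
      (𝓝 (b i - ⟪a i, y⟫)) :=
    (by fun_prop : Continuous fun x => b i - ⟪a i, x⟫).continuousWithinAt
  have hactive : Tendsto (fun x => b j - ⟪a j, x⟫) (𝓝[interior (polyhedron a b)] y) (𝓝[>] 0) :=
    tendsto_nhdsWithin_iff.2 ⟨by simpa only [hj, sub_self] using hslack j,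
      eventually_mem_nhdsWithin.mono fun x hx => hpos hx j⟩
  have hbounded : IsBoundedUnder (· ≤ ·) (𝓝[interior (polyhedron a b)] y) (fun x => ‖x - z‖) :=
    ((by fun_prop : Continuous fun x => ‖x - z‖).continuousWithinAt).isBoundedUnder_le
  have hterm := (tendsto_log_add_one_mul_sub_nhdsGT_zero (hpos hz j)).comp hactive
  have hrest := tendsto_finsetSum (Finset.univ.erase j) fun i _ =>
    ((hslack i).sub_const (b i - ⟪a i, z⟫)).const_mul (Real.log (b i - ⟪a i, z⟫) + 1)
  refine tendsto_norm_atTop_of_tendsto_inner_atTop hbounded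
    (tendsto_atTop_mono' _ ?_ (hterm.atTop_add hrest))
  filter_upwards [eventually_mem_nhdsWithin] with x hx
  rw [inner_gradient_polyhedralEntropy_sub (fun i => (hpos hx i).ne'),
    ← Finset.add_sum_erase _ _ (Finset.mem_univ j)]
  exact add_le_add_right (Finset.sum_le_sum fun i _ =>
    log_add_one_mul_sub_le (hpos hx i) (hpos hz i)) _

theorem stmt_11_general [CompleteSpace E] (ha : ∀ i, a i ≠ 0)
    (hbdd : Bornology.IsBounded (polyhedron a b)) :
    ContinuousOn (polyhedralEntropy a b) (polyhedron a b) ∧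
    (∀ y ∈ polyhedron a b \ interior (polyhedron a b),
      Tendsto (fun x => ‖gradient (polyhedralEntropy a b) x‖) (𝓝[interior (polyhedron a b)] y)
        atTop) ∧
    ∃ m > 0, StrongConvexOn (polyhedron a b) m (polyhedralEntropy a b) :=
  ⟨continuous_polyhedralEntropy.continuousOn,
    fun _ hy => tendsto_norm_gradient_polyhedralEntropy ha hy,
    exists_strongConvexOn_polyhedralEntropy hbdd⟩

end Entropy

/-- The polyhedral entropy generating function
`ψ(x) = Σᵢ (bᵢ - ⟨aᵢ,x⟩) log(bᵢ - ⟨aᵢ,x⟩)` on a bounded polyhedron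
`X = {x : ⟨aᵢ,x⟩ ≤ bᵢ ∀i}` with nonempty interior: `ψ` is continuous on `X`, its
gradient blows up along interior sequences converging to boundary points, and `ψ` is
`m`-strongly convex on `int X` for some `m > 0`.
(Mathlib's `Real.log 0 = 0` realizes the convention `0 · log 0 = 0`.) -/
theorem stmt_11 {N M : ℕ} (a : Fin M → EuclideanSpace ℝ (Fin N)) (b : Fin M → ℝ)
    (ha : ∀ i, a i ≠ 0)
    (hbdd : Bornology.IsBounded {x : EuclideanSpace ℝ (Fin N) | ∀ i, ⟪a i, x⟫ ≤ b i})
    (hint : (interior {x : EuclideanSpace ℝ (Fin N) | ∀ i, ⟪a i, x⟫ ≤ b i}).Nonempty) :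
    let X : Set (EuclideanSpace ℝ (Fin N)) := {x | ∀ i, ⟪a i, x⟫ ≤ b i}
    let ψ : EuclideanSpace ℝ (Fin N) → ℝ := fun x =>
      ∑ i, (b i - ⟪a i, x⟫) * Real.log (b i - ⟪a i, x⟫)
    ContinuousOn ψ X ∧
    (∀ (u : ℕ → EuclideanSpace ℝ (Fin N)) (y : EuclideanSpace ℝ (Fin N)),
      (∀ k, u k ∈ interior X) → y ∈ X \ interior X →
      Tendsto u atTop (𝓝 y) → Tendsto (fun k => ‖gradient ψ (u k)‖) atTop atTop) ∧
    (∃ m : ℝ, 0 < m ∧ ConvexOn ℝ (interior X) (fun x => ψ x - m / 2 * ‖x‖ ^ 2)) := by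
  obtain ⟨hcont, hgrad, m, hm, hconv⟩ := stmt_11_general ha hbdd
  exact ⟨hcont, fun u y hu hy hlim =>
    (hgrad y hy).comp (tendsto_nhdsWithin_iff.2 ⟨hlim, .of_forall hu⟩), m, hm,
    (strongConvexOn_iff_convex.1 hconv).subset interior_subset convex_polyhedron.interior⟩
end
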